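/- Let λ be any partition. Then, as integers, |λ| · Σ_{μ ⋖ λ} F_μ · c(μ) = (|λ| − 2) · F_λ · c(λ), where the sum runs over all partitions μ obtained from λ by removing a single box of its Young diagram, F denotes the number of standard Young tableaux of the given shape, and c(·) is the content sum. -/

import Mathlib

/-- A partition: a weakly decreasing list of positive integers. -/
def IsPartition (l : List ℕ) : Prop :=
  l.Pairwise (· ≥ ·) ∧ ∀ x ∈ l, 0 < x

/-- The `i`-th part of a partition list (0 beyond the length). -/
def partAt (l : List ℕ) (i : ℕ) : ℕ := l.getD i 0

/-- Containment of Young diagrams: `a ⊆ b` iff every part of `a` is at most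
the corresponding part of `b`. -/
def SubP (a b : List ℕ) : Prop := ∀ i, partAt a i ≤ partAt b i

/-- `a ⋖ b` in Young's lattice: `a ⊆ b` and `|b| = |a| + 1`. -/
def Covers (a b : List ℕ) : Prop := SubP a b ∧ a.sum + 1 = b.sum

/-- `numPaths a b` is the number of saturated chains from `a` to `b` in Young's
lattice, i.e. the skew standard-tableau count `F_{b/a}` (0 if `a ⊄ b`, and
`F_b` when `a = ∅`). -/
noncomputable def numPaths (a b : List ℕ) : ℕ :=
  Nat.card {c : Fin (b.sum - a.sum + 1) → List ℕ //
    c 0 = a ∧ c (Fin.last _) = b ∧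
    ∀ i : Fin (b.sum - a.sum),
      IsPartition (c i.castSucc) ∧ IsPartition (c i.succ) ∧
        Covers (c i.castSucc) (c i.succ)}

/-- The content sum `c(λ) = Σ_{(i,j)∈λ} (j − i)`. -/
def contentSum (l : List ℕ) : ℤ :=
  ∑ i : Fin l.length, ∑ j ∈ Finset.Icc 1 (l.get i), ((j : ℤ) - ((i : ℕ) + 1))

/-!
Encode a partition `λ` with at most `N` parts by the coefficients of its alternant
`a_{λ+δ} = det (x_j ^ (λ_i + N - 1 - i))`, rows counted from `0`. The operator `D = ∑ j, x_j⁻¹`,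
which lowers one exponent in all possible ways, sends `a_{λ+δ}` to `∑_{μ ⋖ λ} a_{μ+δ}`: lowering an
exponent at a row that is not a corner produces two equal exponents or a negative one. So
`D ^ |λ|` sends `a_{λ+δ}` to `F_λ • a_δ`.

Since `2 c(λ) = ∑ λ_i (λ_i - 2 i - 1)` is, up to a constant, a symmetric quadratic polynomial in the
exponents, `2 c(λ)` is the eigenvalue at `a_{λ+δ}` of a diagonal operator `C` whose entries have
vanishing third differences. Hence `⁅D, ⁅D, ⁅D, C⁆⁆⁆ = 0`, and by Leibniz' rule
`D ^ n * C = C * D ^ n + n ⁅D, C⁆ * D ^ (n - 1) + (n choose 2) ⁅D, ⁅D, C⁆⁆ * D ^ (n - 2)`.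
Because `∅` and `□` have content zero, only the last term survives when this is applied to
`a_{λ+δ}` with `|λ| ≤ n`. Hence, for `|λ| = n + 1`, both `D ^ n * C * D` and `D ^ (n + 1) * C` send
`a_{λ+δ}` to multiples of `⁅D, ⁅D, C⁆⁆ (D ^ (n - 1) a_{λ+δ})`, by `n choose 2` and
`n + 1 choose 2`. The ratio of these factors is `(|λ| - 2) / |λ|`.
-/

attribute [local instance] LieRing.ofAssociativeRing

section Commutator

theorem pow_mul_eq_sum_ad {A : Type*} [Ring A] (D C : A) (n : ℕ) :
    D ^ n * C =
      ∑ k ∈ Finset.range (n + 1),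
        n.choose k • (((LieAlgebra.ad ℤ A D) ^ k) C * D ^ (n - k)) := by
  have hsplit : LinearMap.mulLeft ℤ D = LieAlgebra.ad ℤ A D + LinearMap.mulRight ℤ D := by
    rw [LieAlgebra.ad_eq_lmul_left_sub_lmul_right, Pi.sub_apply, sub_add_cancel]
  have hcomm : Commute (LieAlgebra.ad ℤ A D) (LinearMap.mulRight ℤ D) := by
    rw [LieAlgebra.ad_eq_lmul_left_sub_lmul_right]
    exact (LinearMap.commute_mulLeft_right D D).sub_left (Commute.refl _)
  calc D ^ n * C
      = ((LieAlgebra.ad ℤ A D + LinearMap.mulRight ℤ D) ^ n) C := by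
        rw [← hsplit, LinearMap.pow_mulLeft, LinearMap.mulLeft_apply]
    _ = ∑ k ∈ Finset.range (n + 1),
          n.choose k • (LinearMap.mulRight ℤ D ^ (n - k) * LieAlgebra.ad ℤ A D ^ k) C := by
        rw [hcomm.add_pow, LinearMap.sum_apply]
        refine Finset.sum_congr rfl fun k _ => ?_
        rw [← Nat.cast_comm, ← nsmul_eq_mul, LinearMap.smul_apply, (hcomm.pow_pow _ _).eq]
    _ = _ := by
        simp only [Module.End.mul_apply, LinearMap.pow_mulRight, LinearMap.mulRight_apply]

variable {M : Type*} [AddCommGroup M] {D C : Module.End ℤ M}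

theorem pow_apply_eq_choose_smul_of_lie_lie_lie_eq_zero (hDC : ⁅D, ⁅D, ⁅D, C⁆⁆⁆ = 0) {n : ℕ} {v : M}
    (hv : ∀ k, n ≤ k + 1 → C ((D ^ k) v) = 0) :
    (D ^ n) (C v) = n.choose 2 • ⁅D, ⁅D, C⁆⁆ ((D ^ (n - 2)) v) := by
  rw [← Module.End.mul_apply, pow_mul_eq_sum_ad, LinearMap.sum_apply,
    Finset.sum_eq_single 2]
  · simp [pow_two]
  · intro k _ hk
    rcases k with _ | _ | _ | k
    · simp [hv n (by omega)]
    · rcases n with _ | n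
      · simp
      · have hn := hv n le_rfl
        have hn' := hv (n + 1) (by omega)
        rw [pow_succ', Module.End.mul_apply] at hn'
        simp [Ring.lie_def, hn, hn']
    · exact absurd rfl hk
    · have hk3 : (LieAlgebra.ad ℤ (Module.End ℤ M) D ^ (k + 3)) C = 0 := by
        rw [pow_add, Module.End.mul_apply]
        simp [pow_succ, hDC]
      simp [hk3]
  · intro hn
    rw [Nat.choose_eq_zero_of_lt (by simpa using hn), zero_smul, LinearMap.zero_apply]

theorem succ_smul_pow_apply_eq_of_lie_lie_lie_eq_zero (hDC : ⁅D, ⁅D, ⁅D, C⁆⁆⁆ = 0) {n : ℕ} {v : M}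
    (hv : ∀ k, n ≤ k → C ((D ^ k) v) = 0) :
    ((n : ℤ) + 1) • (D ^ n) (C (D v)) = ((n : ℤ) - 1) • (D ^ (n + 1)) (C v) := by
  have hDv : ∀ k, n ≤ k + 1 → C ((D ^ k) (D v)) = 0 := fun k hk => by
    simpa only [pow_succ, Module.End.mul_apply] using hv (k + 1) hk
  rw [pow_apply_eq_choose_smul_of_lie_lie_lie_eq_zero hDC hDv,
    pow_apply_eq_choose_smul_of_lie_lie_lie_eq_zero hDC fun k hk => hv k (by omega)]
  have hchoose : (n + 1 : ℤ) * n.choose 2 = (n - 1) * (n + 1).choose 2 := by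
    rcases n with _ | n
    · simp
    · have := Nat.choose_mul_succ_eq (n + 1) 2
      zify [show 2 ≤ n + 1 + 1 by omega] at this
      push_cast at this ⊢
      linear_combination this
  simp only [← natCast_zsmul, smul_smul, hchoose]
  rcases n with _ | _ | n
  · simp
  · simp
  · rw [← Module.End.mul_apply _ D, ← pow_succ]
    rfl

end Commutator

section Difference

open fwdDiff_aux (shiftₗ shiftₗ_apply)

variable {X A : Type*} [AddCommMonoid X] [Ring A]

theorem lie_shift_mulLeft_mul (h : X) (f : X → A) {T : Module.End ℤ (X → A)}
    (hT : Commute (shiftₗ X A h) T) :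
    ⁅shiftₗ X A h, LinearMap.mulLeft ℤ f * T⁆ =
      LinearMap.mulLeft ℤ (fwdDiff h f) * (shiftₗ X A h * T) := by
  rw [Ring.lie_def, mul_assoc _ T, ← hT.eq]
  ext φ x
  simp [shiftₗ_apply, fwdDiff, sub_mul]

theorem commute_shift (h h' : X) : Commute (shiftₗ X A h) (shiftₗ X A h') := by
  ext φ x
  simp [shiftₗ_apply, add_right_comm]

theorem lie_lie_lie_sum_shift_mulLeft_eq_zero {ι : Type*} (s : Finset ι) (h : ι → X) {f : X → A}
    (hf : ∀ i j k, fwdDiff (h i) (fwdDiff (h j) (fwdDiff (h k) f)) = 0) :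
    ⁅∑ i ∈ s, shiftₗ X A (h i), ⁅∑ i ∈ s, shiftₗ X A (h i),
      ⁅∑ i ∈ s, shiftₗ X A (h i), LinearMap.mulLeft ℤ f⁆⁆⁆ = 0 := by
  have hlie (i : ι) (g : X → A) : ⁅shiftₗ X A (h i), LinearMap.mulLeft ℤ g⁆ =
      LinearMap.mulLeft ℤ (fwdDiff (h i) g) * shiftₗ X A (h i) := by
    simpa using lie_shift_mulLeft_mul (h i) g (Commute.one_right _)
  simp only [sum_lie, lie_sum]
  refine Finset.sum_eq_zero fun i _ => Finset.sum_eq_zero fun j _ =>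
    Finset.sum_eq_zero fun k _ => ?_
  rw [hlie, lie_shift_mulLeft_mul, lie_shift_mulLeft_mul, hf]
  · simp
  · exact (commute_shift _ _).mul_right (commute_shift _ _)
  · exact commute_shift _ _

end Difference

section Alternant

open fwdDiff_aux (shiftₗ shiftₗ_apply)

variable {ι : Type*} [Fintype ι] [DecidableEq ι]

/-- The coefficients of the alternant `det (x_j ^ (b i))`: the value at `a` is the coefficient of
`∏ j, x_j ^ (a j)`. Rows with a negative exponent `b i` are zero, so that lowering exponents never
leaves the span of honest alternants. -/
def alternant (b : ι → ℤ) : (ι → ℕ) → ℤ :=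
  fun a => (Matrix.of fun i j => if b i = a j then (1 : ℤ) else 0).det

theorem alternant_apply (b : ι → ℤ) (a : ι → ℕ) :
    alternant b a = ∑ σ : Equiv.Perm ι,
      (Equiv.Perm.sign σ : ℤ) * if ∀ j, b (σ j) = a j then 1 else 0 := by
  simp only [alternant, Matrix.det_apply', Matrix.of_apply, Fintype.prod_boole,
    Int.cast_id]

theorem alternant_natCast_self {b : ι → ℕ} (hb : Function.Injective b) :
    alternant (fun i => (b i : ℤ)) b = 1 := by
  have hone : (Matrix.of fun i j => if (b i : ℤ) = b j then (1 : ℤ) else 0) = 1 := by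
    ext i j
    simp [Matrix.one_apply, hb.eq_iff]
  rw [alternant, hone, Matrix.det_one]

theorem alternant_eq_zero_of_eq {b : ι → ℤ} {i j : ι} (hij : i ≠ j) (hb : b i = b j) :
    alternant b = 0 :=
  funext fun _ => Matrix.det_zero_of_row_eq hij (by ext; simp [hb])

theorem alternant_eq_zero_of_neg {b : ι → ℤ} {i : ι} (hb : b i < 0) : alternant b = 0 :=
  funext fun _ => Matrix.det_eq_zero_of_row_eq_zero i fun j => if_neg (by omega)

variable (ι) in
/-- The sum of all exponent-lowering operators: in terms of generating functions, the sum over `j`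
of division by `x_j`, discarding monomials not divisible by `x_j`. -/
noncomputable def lowering : Module.End ℤ ((ι → ℕ) → ℤ) :=
  ∑ j, shiftₗ (ι → ℕ) ℤ (Pi.single j 1)

theorem lowering_alternant (b : ι → ℤ) :
    lowering ι (alternant b) = ∑ i, alternant (b - Pi.single i 1) := by
  ext a
  simp only [lowering, LinearMap.sum_apply, Finset.sum_apply, shiftₗ_apply, alternant_apply]
  rw [Finset.sum_comm, Finset.sum_comm (s := Finset.univ (α := ι))]
  refine Finset.sum_congr rfl fun σ _ => Fintype.sum_equiv σ _ _ fun j => ?_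
  have hshift (k : ι) : b (σ k) = ((a + Pi.single j 1 : ι → ℕ) k : ℤ) ↔
      (b - Pi.single (σ j) 1 : ι → ℤ) (σ k) = a k := by
    by_cases hk : k = j
    · subst hk
      simp [sub_eq_iff_eq_add]
    · simp [hk]
  simp only [hshift]

theorem sum_mul_alternant (f : ℤ → ℤ) (b : ι → ℤ) :
    (fun a : ι → ℕ => ∑ j, f (a j)) * alternant b = (∑ i, f (b i)) • alternant b := by
  ext a
  simp only [Pi.mul_apply, Pi.smul_apply, smul_eq_mul, alternant_apply, Finset.mul_sum]
  refine Finset.sum_congr rfl fun σ _ => ?_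
  split_ifs with h
  · rw [← Equiv.sum_comp σ fun i => f (b i)]
    simp only [h]
  · simp

end Alternant

theorem partAt_eq_getElem {l : List ℕ} {i : ℕ} (h : i < l.length) : partAt l i = l[i] :=
  List.getD_eq_getElem l 0 h

theorem partAt_eq_zero {l : List ℕ} {i : ℕ} (h : l.length ≤ i) : partAt l i = 0 :=
  List.getD_eq_default l 0 h

theorem lt_length_of_partAt_pos {l : List ℕ} {i : ℕ} (h : 0 < partAt l i) : i < l.length := by
  by_contra! hi
  exact h.ne' (partAt_eq_zero hi)

theorem sum_range_partAt {M : Type*} [AddCommMonoid M] {l : List ℕ} {N : ℕ} (hN : l.length ≤ N)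
    {g : ℕ → ℕ → M} (hg : ∀ i, g i 0 = 0) :
    ∑ i ∈ Finset.range N, g i (partAt l i) = ∑ i : Fin l.length, g i (l.get i) := by
  rw [← Finset.sum_subset (Finset.range_subset_range.2 hN), Finset.sum_range]
  · exact Finset.sum_congr rfl fun i _ => by rw [partAt_eq_getElem i.2, List.get_eq_getElem]
  · intro i _ hi
    rw [partAt_eq_zero (by simpa using hi), hg]

theorem sum_eq_sum_partAt {l : List ℕ} {N : ℕ} (hN : l.length ≤ N) :
    l.sum = ∑ i ∈ Finset.range N, partAt l i := by
  rw [sum_range_partAt hN (g := fun _ p => p) fun _ => rfl, ← Fin.sum_univ_getElem]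
  rfl

theorem two_mul_contentSum {l : List ℕ} {N : ℕ} (hN : l.length ≤ N) :
    2 * contentSum l =
      ∑ i ∈ Finset.range N, (partAt l i : ℤ) * (partAt l i - 2 * i - 1) := by
  have hrow (i p : ℕ) :
      2 * ∑ j ∈ Finset.Icc 1 p, ((j : ℤ) - (i + 1)) = p * (p - 2 * i - 1) := by
    induction p with
    | zero => simp
    | succ p ih =>
      rw [Finset.sum_Icc_succ_top (by omega), mul_add, ih]
      push_cast
      ring
  rw [sum_range_partAt hN (g := fun i p => (p : ℤ) * (p - 2 * i - 1)) (by simp), contentSum,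
    Finset.mul_sum]
  exact Finset.sum_congr rfl fun i _ => hrow i _

theorem covers_iff_exists_partAt_eq {m l : List ℕ} :
    Covers m l ↔ ∃ i, partAt l = partAt m + Pi.single i 1 := by
  have hsum (N : ℕ) (hN : l.length ≤ N ∧ m.length ≤ N) (h : SubP m l) :
      m.sum + 1 = l.sum ↔ ∑ i ∈ Finset.range N, (partAt l i - partAt m i) = 1 := by
    rw [sum_eq_sum_partAt hN.1, sum_eq_sum_partAt hN.2, Finset.sum_tsub_distrib _ fun i _ => h i]
    have := Finset.sum_le_sum (s := Finset.range N) fun i _ => h i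
    omega
  constructor
  · rintro ⟨hle, hml⟩
    have hsupp (i : ℕ) (hi : partAt l i - partAt m i ≠ 0) :
        i ∈ Finset.range (max l.length m.length) :=
      Finset.mem_range.2 (lt_max_of_lt_left (lt_length_of_partAt_pos (by omega)))
    obtain ⟨i, hi⟩ := (Finsupp.sum_eq_one_iff (Finsupp.onFinset _ _ hsupp)).1
      ((Finsupp.onFinset_sum _ fun _ => rfl).trans
        ((hsum (max l.length m.length) (by simp) hle).1 hml))
    refine ⟨i, funext fun j => ?_⟩
    have hj : partAt l j - partAt m j = (Pi.single i 1 : ℕ → ℕ) j := by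
      rw [← Finsupp.single_eq_pi_single, ← hi, Finsupp.onFinset_apply]
    rw [Pi.add_apply, ← hj, add_tsub_cancel_of_le (hle j)]
  · rintro ⟨i, hi⟩
    have hle : SubP m l := fun j => hi ▸ Nat.le_add_right _ _
    refine ⟨hle, (hsum (max (max l.length m.length) (i + 1)) (by simp) hle).2 ?_⟩
    simp [hi]

theorem antitone_partAt_iff {l : List ℕ} : Antitone (partAt l) ↔ l.Pairwise (· ≥ ·) := by
  rw [List.pairwise_iff_getElem]
  refine ⟨fun h i j hi hj hij => ?_, fun h => antitone_iff_forall_lt.2 fun i j hij => ?_⟩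
  · simpa only [partAt_eq_getElem hi, partAt_eq_getElem hj] using h hij.le
  · rcases lt_or_ge j l.length with hj | hj
    · rw [partAt_eq_getElem hj, partAt_eq_getElem (hij.trans hj)]
      exact h i j _ hj hij
    · rw [partAt_eq_zero hj]
      exact Nat.zero_le _

theorem partAt_filter_pos {l : List ℕ} (hl : l.Pairwise (· ≥ ·)) :
    partAt (l.filter (0 < ·)) = partAt l := by
  induction l with
  | nil => rfl
  | cons p t ih =>
    rw [List.pairwise_cons] at hl
    ext i
    rcases Nat.eq_zero_or_pos p with rfl | hp
    · have ht : ∀ x ∈ (0 :: t), x = 0 := by simpa using hl.1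
      rw [List.filter_eq_nil_iff.2 fun x hx => by simp [ht x hx], partAt_eq_zero (Nat.zero_le _)]
      by_contra! hi
      have hi' := lt_length_of_partAt_pos (Nat.pos_of_ne_zero hi.symm)
      rw [partAt_eq_getElem hi'] at hi
      exact hi (ht _ (List.getElem_mem hi')).symm
    · rw [List.filter_cons_of_pos (by simpa using hp)]
      cases i with
      | zero => rfl
      | succ i => exact congrFun (ih hl.2) i

namespace IsPartition

variable {l m : List ℕ}

theorem antitone_partAt (hl : IsPartition l) : Antitone (partAt l) :=
  antitone_partAt_iff.2 hl.1

theorem partAt_pos_iff (hl : IsPartition l) {i : ℕ} : 0 < partAt l i ↔ i < l.length := by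
  refine ⟨lt_length_of_partAt_pos, fun h => ?_⟩
  rw [partAt_eq_getElem h]
  exact hl.2 _ (List.getElem_mem h)

theorem ext_partAt (hl : IsPartition l) (hm : IsPartition m) (h : partAt l = partAt m) :
    l = m := by
  have hlength : l.length = m.length :=
    eq_of_forall_lt_iff fun i => by rw [← hl.partAt_pos_iff, ← hm.partAt_pos_iff, h]
  refine List.ext_getElem hlength fun i hi hi' => ?_
  rw [← partAt_eq_getElem hi, ← partAt_eq_getElem hi', h]

theorem length_le_of_subP (hm : IsPartition m) (h : SubP m l) : m.length ≤ l.length := by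
  by_contra! hlt
  exact lt_irrefl _ (lt_length_of_partAt_pos ((hm.partAt_pos_iff.2 hlt).trans_le (h _)))

theorem eq_nil_of_sum_eq_zero (hl : IsPartition l) (h : l.sum = 0) : l = [] :=
  List.eq_nil_iff_forall_not_mem.2 fun x hx =>
    (hl.2 x hx).ne' (List.sum_eq_zero_iff.1 h x hx)

end IsPartition

/-- Shorten row `i` by one box, dropping it if it becomes empty. -/
def removeBox (l : List ℕ) (i : ℕ) : List ℕ :=
  (l.modify i (· - 1)).filter (0 < ·)

/-- The rows from which a box can be removed. -/
def corners (l : List ℕ) : Finset ℕ :=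
  {i ∈ Finset.range l.length | partAt l (i + 1) < partAt l i}

theorem mem_corners {l : List ℕ} {i : ℕ} : i ∈ corners l ↔ partAt l (i + 1) < partAt l i := by
  simp only [corners, Finset.mem_filter, Finset.mem_range, and_iff_right_iff_imp]
  exact fun h => lt_length_of_partAt_pos (by omega)

theorem partAt_modify_pred (l : List ℕ) (i : ℕ) :
    partAt (l.modify i (· - 1)) = partAt l - Pi.single i 1 := by
  ext j
  rcases eq_or_ne j i with rfl | hj
  · cases h : l[j]? <;> simp [partAt, List.getD_eq_getElem?_getD, h]
  · simp [partAt, List.getD_eq_getElem?_getD, hj, hj.symm]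

section removeBox

variable {l : List ℕ} {i : ℕ}

theorem pairwise_modify_pred (hl : IsPartition l) (hi : i ∈ corners l) :
    (l.modify i (· - 1)).Pairwise (· ≥ ·) := by
  rw [← antitone_partAt_iff, partAt_modify_pred]
  refine antitone_nat_of_succ_le fun j => ?_
  have hj := hl.antitone_partAt (Nat.le_add_right j 1)
  rw [mem_corners] at hi
  simp only [Pi.sub_apply, Pi.single_apply]
  grind

theorem partAt_removeBox_add_single (hl : IsPartition l) (hi : i ∈ corners l) :
    partAt (removeBox l i) + Pi.single i 1 = partAt l := by
  rw [removeBox, partAt_filter_pos (pairwise_modify_pred hl hi), partAt_modify_pred]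
  refine tsub_add_cancel_of_le fun j => ?_
  rw [mem_corners] at hi
  simp only [Pi.single_apply]
  grind

theorem isPartition_removeBox (hl : IsPartition l) (hi : i ∈ corners l) :
    IsPartition (removeBox l i) :=
  ⟨(pairwise_modify_pred hl hi).filter _, by simp [removeBox]⟩

end removeBox

/-- The finite set of partitions covered by `l` in Young's lattice. -/
def lowerCovers (l : List ℕ) : Finset (List ℕ) :=
  (corners l).image (removeBox l)

section lowerCovers

variable {l m : List ℕ}

theorem mem_lowerCovers (hl : IsPartition l) :
    m ∈ lowerCovers l ↔ IsPartition m ∧ Covers m l := by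
  simp only [lowerCovers, Finset.mem_image]
  constructor
  · rintro ⟨i, hi, rfl⟩
    exact ⟨isPartition_removeBox hl hi,
      covers_iff_exists_partAt_eq.2 ⟨i, (partAt_removeBox_add_single hl hi).symm⟩⟩
  · rintro ⟨hm, hml⟩
    obtain ⟨i, hi⟩ := covers_iff_exists_partAt_eq.1 hml
    have hcorner : i ∈ corners l := by
      have := hm.antitone_partAt (Nat.le_add_right i 1)
      simp only [mem_corners, hi, Pi.add_apply, Pi.single_apply]
      grind
    refine ⟨i, hcorner, (isPartition_removeBox hl hcorner).ext_partAt hm ?_⟩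
    exact add_right_cancel ((partAt_removeBox_add_single hl hcorner).trans hi)

theorem isPartition_of_mem_lowerCovers (hl : IsPartition l) (hm : m ∈ lowerCovers l) :
    IsPartition m :=
  ((mem_lowerCovers hl).1 hm).1

theorem length_le_of_mem_lowerCovers (hl : IsPartition l) (hm : m ∈ lowerCovers l) :
    m.length ≤ l.length :=
  (isPartition_of_mem_lowerCovers hl hm).length_le_of_subP ((mem_lowerCovers hl).1 hm).2.1

theorem sum_add_one_of_mem_lowerCovers (hl : IsPartition l) (hm : m ∈ lowerCovers l) :
    m.sum + 1 = l.sum :=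
  ((mem_lowerCovers hl).1 hm).2.2

theorem sum_lowerCovers {M : Type*} [AddCommMonoid M] (hl : IsPartition l)
    (g : List ℕ → M) : ∑ m ∈ lowerCovers l, g m = ∑ i ∈ corners l, g (removeBox l i) := by
  refine Finset.sum_image fun i hi j hj hij => ?_
  have hadd := (partAt_removeBox_add_single hl hi).trans (partAt_removeBox_add_single hl hj).symm
  rw [hij] at hadd
  simpa [Pi.single_apply] using congrFun (add_left_cancel hadd) i

theorem finsum_mem_covers {M : Type*} [AddCommMonoid M] (hl : IsPartition l)
    (g : List ℕ → M) :
    ∑ᶠ m ∈ {m : List ℕ | IsPartition m ∧ Covers m l}, g m = ∑ m ∈ lowerCovers l, g m := by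
  rw [← finsum_mem_coe_finset]
  congr! 3 with m
  exact (mem_lowerCovers hl).symm

end lowerCovers

/-- Saturated chains of length `n` from `a` to `b` in Young's lattice. Keeping `n` apart from
`b.sum - a.sum` lets chains be split without transporting along equations in `Fin`. -/
def Chains (a : List ℕ) (n : ℕ) (b : List ℕ) : Type :=
  {c : Fin (n + 1) → List ℕ //
    c 0 = a ∧ c (Fin.last _) = b ∧
    ∀ i : Fin n,
      IsPartition (c i.castSucc) ∧ IsPartition (c i.succ) ∧
        Covers (c i.castSucc) (c i.succ)}

theorem numPaths_eq_card_chains (a b : List ℕ) :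
    numPaths a b = Nat.card (Chains a (b.sum - a.sum) b) :=
  rfl

namespace Chains

variable {a b : List ℕ} {n : ℕ}

instance : Subsingleton (Chains a 0 b) where
  allEq c d := Subtype.ext <| funext fun i => by
    rw [Subsingleton.elim (α := Fin 1) i 0, c.2.1, d.2.1]

theorem sigma_ext {S : Finset (List ℕ)} {p q : Σ m : S, Chains a n m} (h : p.2.1 = q.2.1) :
    p = q := by
  obtain ⟨⟨m, hm⟩, c, h0, hlast, hc⟩ := p
  obtain ⟨⟨m', hm'⟩, c', h0', hlast', hc'⟩ := q
  obtain rfl : c = c' := h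
  obtain rfl : m = m' := hlast.symm.trans hlast'
  rfl

/-- Splitting off the last step of a chain, which gives the recursion for `numPaths`. -/
def succEquiv (hb : IsPartition b) :
    Chains a (n + 1) b ≃ Σ m : lowerCovers b, Chains a n m where
  toFun c :=
    ⟨⟨c.1 (Fin.last n).castSucc, (mem_lowerCovers hb).2
        ⟨(c.2.2.2 (Fin.last n)).1, by
          simpa only [Fin.succ_last, c.2.2.1] using (c.2.2.2 (Fin.last n)).2.2⟩⟩,
      fun i => c.1 i.castSucc, c.2.1, rfl, fun i => c.2.2.2 i.castSucc⟩
  invFun p :=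
    ⟨Fin.snoc (α := fun _ => List ℕ) p.2.1 b,
      (Fin.snoc_castSucc (α := fun _ => List ℕ) b p.2.1 0).trans p.2.2.1,
      Fin.snoc_last _ _,
      Fin.lastCases
        (by
          have hm := (mem_lowerCovers hb).1 p.1.2
          simpa only [Fin.succ_last, Fin.snoc_last, Fin.snoc_castSucc, p.2.2.2.1] using
            ⟨hm.1, hb, hm.2⟩)
        fun i => by
          simpa only [Fin.succ_castSucc, Fin.snoc_castSucc] using p.2.2.2.2 i⟩
  left_inv c := Subtype.ext <| funext <|
    Fin.lastCases (by simp only [Fin.snoc_last, c.2.2.1]) fun i => by simp only [Fin.snoc_castSucc]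
  right_inv p := sigma_ext <| funext fun i => by simp only [Fin.snoc_castSucc]

theorem finite (hb : IsPartition b) : Finite (Chains a n b) := by
  induction n generalizing b with
  | zero => infer_instance
  | succ n ih =>
    have (m : lowerCovers b) : Finite (Chains a n m) := ih (isPartition_of_mem_lowerCovers hb m.2)
    exact Finite.of_equiv _ (succEquiv hb).symm

end Chains

theorem numPaths_self (a : List ℕ) : numPaths a a = 1 := by
  rw [numPaths_eq_card_chains, tsub_self, Nat.card_eq_one_iff_unique]
  exact ⟨inferInstance, ⟨fun _ => a, rfl, rfl, fun i => i.elim0⟩⟩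

theorem numPaths_eq_sum_lowerCovers {a l : List ℕ} (hl : IsPartition l) (h : a.sum < l.sum) :
    numPaths a l = ∑ m ∈ lowerCovers l, numPaths a m := by
  obtain ⟨n, hn⟩ := Nat.exists_eq_add_of_lt h
  have (m : lowerCovers l) : Finite (Chains a n m) :=
    Chains.finite (isPartition_of_mem_lowerCovers hl m.2)
  rw [numPaths_eq_card_chains, show l.sum - a.sum = n + 1 by omega,
    Nat.card_congr (Chains.succEquiv hl), Nat.card_sigma, Finset.sum_coe_sort _ fun m =>
      Nat.card (Chains a n m)]
  refine Finset.sum_congr rfl fun m hm => ?_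
  rw [numPaths_eq_card_chains, show m.sum - a.sum = n by
    have := sum_add_one_of_mem_lowerCovers hl hm
    omega]

/-- The entries `λ_i + N - 1 - i` of `λ + δ`, the exponents of the alternant of `λ` in `N`
variables. -/
def shiftedParts (N : ℕ) (l : List ℕ) : Fin N → ℤ :=
  fun i => partAt l i + (i.rev : ℕ)

/-- The alternant `a_{λ+δ}` in `N` variables, that is, the Schur polynomial of `λ` times the
Vandermonde determinant. -/
def partitionAlternant (N : ℕ) (l : List ℕ) : (Fin N → ℕ) → ℤ :=
  alternant (shiftedParts N l)

theorem partitionAlternant_nil_apply_rev (N : ℕ) :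
    partitionAlternant N [] (fun i => i.rev) = 1 := by
  have h : shiftedParts N [] = fun i => ((i.rev : ℕ) : ℤ) := by
    ext i
    simp [shiftedParts, partAt]
  rw [partitionAlternant, h]
  exact alternant_natCast_self (Fin.val_injective.comp Fin.rev_injective)

section Lowering

variable {N : ℕ} {l : List ℕ}

theorem alternant_shiftedParts_sub_single_of_mem_corners (hl : IsPartition l) {i : Fin N}
    (hi : (i : ℕ) ∈ corners l) :
    alternant (shiftedParts N l - Pi.single i 1) = partitionAlternant N (removeBox l i) := by
  rw [partitionAlternant]
  congr 1
  ext j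
  simp only [shiftedParts, Pi.sub_apply, ← partAt_removeBox_add_single hl hi, Pi.add_apply]
  rcases eq_or_ne j i with rfl | hj
  · simp only [Pi.single_eq_same]
    push_cast
    ring
  · simp [hj, Fin.val_ne_of_ne hj]

theorem alternant_shiftedParts_sub_single_of_notMem_corners (hl : IsPartition l)
    (hN : l.length ≤ N) {i : Fin N} (hi : (i : ℕ) ∉ corners l) :
    alternant (shiftedParts N l - Pi.single i 1) = 0 := by
  have hpart : partAt l (i + 1) = partAt l i :=
    (hl.antitone_partAt (Nat.le_add_right _ 1)).antisymm (by simpa [mem_corners] using hi)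
  rcases Nat.lt_or_eq_of_le (Nat.succ_le_of_lt i.2) with hlt | hlast
  · have hne : i ≠ ⟨i + 1, hlt⟩ := by simp [Fin.ext_iff]
    refine alternant_eq_zero_of_eq hne ?_
    simp only [shiftedParts, Pi.sub_apply, Pi.single_eq_same, Pi.single_eq_of_ne hne.symm, hpart,
      Fin.val_rev]
    omega
  · refine alternant_eq_zero_of_neg (i := i) ?_
    have hzero : partAt l i = 0 := hpart ▸ partAt_eq_zero (by omega)
    simp only [shiftedParts, Pi.sub_apply, Pi.single_eq_same, hzero, Fin.val_rev]
    omega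

theorem lowering_partitionAlternant (hl : IsPartition l) (hN : l.length ≤ N) :
    lowering (Fin N) (partitionAlternant N l) =
      ∑ m ∈ lowerCovers l, partitionAlternant N m := by
  have hterm (i : Fin N) : alternant (shiftedParts N l - Pi.single i 1) =
      if (i : ℕ) ∈ corners l then partitionAlternant N (removeBox l i) else 0 := by
    split_ifs with hi
    · exact alternant_shiftedParts_sub_single_of_mem_corners hl hi
    · exact alternant_shiftedParts_sub_single_of_notMem_corners hl hN hi
  have hcorners : corners l ⊆ Finset.range N :=
    (Finset.filter_subset _ _).trans (Finset.range_subset_range.2 hN)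
  rw [partitionAlternant, lowering_alternant, sum_lowerCovers hl]
  simp only [hterm]
  rw [Fin.sum_univ_eq_sum_range fun i =>
      if i ∈ corners l then partitionAlternant N (removeBox l i) else 0,
    Finset.sum_ite_mem, Finset.inter_eq_right.2 hcorners]

theorem lowering_pow_succ_partitionAlternant (hl : IsPartition l) (hN : l.length ≤ N) (k : ℕ) :
    (lowering (Fin N) ^ (k + 1)) (partitionAlternant N l) =
      ∑ m ∈ lowerCovers l, (lowering (Fin N) ^ k) (partitionAlternant N m) := by
  rw [pow_succ, Module.End.mul_apply, lowering_partitionAlternant hl hN, map_sum]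

theorem lowering_pow_sum_partitionAlternant (hl : IsPartition l) (hN : l.length ≤ N) :
    (lowering (Fin N) ^ l.sum) (partitionAlternant N l) =
      (numPaths [] l : ℤ) • partitionAlternant N [] := by
  induction hn : l.sum generalizing l with
  | zero =>
    obtain rfl := hl.eq_nil_of_sum_eq_zero hn
    rw [numPaths_self]
    simp
  | succ n ih =>
    rw [lowering_pow_succ_partitionAlternant hl hN,
      numPaths_eq_sum_lowerCovers hl (by simp [hn]), Nat.cast_sum, Finset.sum_smul]
    refine Finset.sum_congr rfl fun m hm => ?_
    exact ih (isPartition_of_mem_lowerCovers hl hm) ((length_le_of_mem_lowerCovers hl hm).trans hN)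
      (by have := sum_add_one_of_mem_lowerCovers hl hm; omega)

end Lowering

/-- The diagonal operator whose eigenvalue at the alternant of `λ` is `2 c(λ)`. The quadratic
polynomial comes from completing the square in `λ_i (λ_i - 2 i - 1)` (rows counted from `0`) at the
shifted part `λ_i + (N - 1 - i)`. -/
noncomputable def contentOperator (N : ℕ) : Module.End ℤ ((Fin N → ℕ) → ℤ) :=
  LinearMap.mulLeft ℤ fun a =>
    ∑ j, ((a j : ℤ) ^ 2 - (2 * N - 1) * a j) -
      ∑ i : Fin N, (((i.rev : ℕ) : ℤ) ^ 2 - (2 * N - 1) * (i.rev : ℕ))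

section Content

variable {N : ℕ} {l : List ℕ}

theorem contentOperator_partitionAlternant (hN : l.length ≤ N) :
    contentOperator N (partitionAlternant N l) =
      (2 * contentSum l) • partitionAlternant N l := by
  set q : ℤ → ℤ := fun t => t ^ 2 - (2 * N - 1) * t
  have hrow (i : Fin N) : q (shiftedParts N l i) - q (i.rev : ℕ) =
      (partAt l i : ℤ) * (partAt l i - 2 * (i : ℕ) - 1) := by
    simp only [q, shiftedParts, Fin.val_rev, Nat.cast_sub i.2]
    push_cast
    ring
  have hsymbol : contentOperator N (partitionAlternant N l) =
      (fun a : Fin N → ℕ => ∑ j, q (a j)) * partitionAlternant N l -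
        (∑ i : Fin N, q (i.rev : ℕ)) • partitionAlternant N l := by
    ext a
    simp [contentOperator, q, sub_mul]
  rw [hsymbol, partitionAlternant, sum_mul_alternant, ← sub_smul, ← Finset.sum_sub_distrib,
    two_mul_contentSum hN, ← Fin.sum_univ_eq_sum_range fun i =>
      (partAt l i : ℤ) * (partAt l i - 2 * i - 1)]
  simp only [hrow]

theorem lie_lie_lie_lowering_contentOperator (N : ℕ) :
    ⁅lowering (Fin N), ⁅lowering (Fin N), ⁅lowering (Fin N), contentOperator N⁆⁆⁆ = 0 := by
  refine lie_lie_lie_sum_shift_mulLeft_eq_zero _ _ fun i j k => ?_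
  ext a
  simp only [fwdDiff, Pi.add_apply, Pi.zero_apply, sub_sub_sub_cancel_right,
    ← Finset.sum_sub_distrib]
  push_cast
  exact Finset.sum_eq_zero fun j _ => by ring

theorem contentSum_eq_zero_of_sum_le_one (hl : IsPartition l) (h : l.sum ≤ 1) :
    contentSum l = 0 := by
  rcases l with _ | ⟨p, t⟩
  · simp [contentSum]
  · have hp := hl.2 p (by simp)
    rw [List.sum_cons] at h
    obtain rfl : t = [] := List.eq_nil_iff_forall_not_mem.2 fun x hx => by
      have := hl.2 x (by simp [hx])
      have := List.le_sum_of_mem hx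
      omega
    obtain rfl : p = 1 := by omega
    rfl

theorem contentOperator_lowering_pow_partitionAlternant {k : ℕ} (hl : IsPartition l)
    (hN : l.length ≤ N) (hk : l.sum ≤ k + 1) :
    contentOperator N ((lowering (Fin N) ^ k) (partitionAlternant N l)) = 0 := by
  induction k generalizing l with
  | zero =>
    rw [pow_zero, Module.End.one_apply, contentOperator_partitionAlternant hN,
      contentSum_eq_zero_of_sum_le_one hl hk, mul_zero, zero_smul]
  | succ k ih =>
    rw [lowering_pow_succ_partitionAlternant hl hN, map_sum]
    refine Finset.sum_eq_zero fun m hm => ?_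
    exact ih (isPartition_of_mem_lowerCovers hl hm) ((length_le_of_mem_lowerCovers hl hm).trans hN)
      (by have := sum_add_one_of_mem_lowerCovers hl hm; omega)

theorem lowering_pow_sum_contentOperator_partitionAlternant (hl : IsPartition l)
    (hN : l.length ≤ N) :
    (lowering (Fin N) ^ l.sum) (contentOperator N (partitionAlternant N l)) =
      (2 * (numPaths [] l * contentSum l)) • partitionAlternant N [] := by
  rw [contentOperator_partitionAlternant hN, map_smul, lowering_pow_sum_partitionAlternant hl hN,
    smul_smul]
  congr 1
  ring

theorem lowering_pow_contentOperator_lowering_partitionAlternant (hl : IsPartition l)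
    (hN : l.length ≤ N) {n : ℕ} (hn : l.sum = n + 1) :
    (lowering (Fin N) ^ n) (contentOperator N (lowering (Fin N) (partitionAlternant N l))) =
      (2 * ∑ m ∈ lowerCovers l, (numPaths [] m * contentSum m)) • partitionAlternant N [] := by
  rw [lowering_partitionAlternant hl hN, map_sum, map_sum, Finset.mul_sum, Finset.sum_smul]
  refine Finset.sum_congr rfl fun m hm => ?_
  obtain rfl : m.sum = n := by have := sum_add_one_of_mem_lowerCovers hl hm; omega
  exact lowering_pow_sum_contentOperator_partitionAlternant (isPartition_of_mem_lowerCovers hl hm)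
    ((length_le_of_mem_lowerCovers hl hm).trans hN)

end Content

/-- `|λ| · Σ_{μ ⋖ λ} F_μ c(μ) = (|λ| − 2) · F_λ · c(λ)`, the sum running over all
partitions `μ` obtained from `λ` by removing one box of the Young diagram. -/
theorem size_mul_sum_F_contentSum (l : List ℕ) (hl : IsPartition l) :
    (l.sum : ℤ) *
        ∑ᶠ m ∈ {m : List ℕ | IsPartition m ∧ Covers m l},
          (numPaths [] m : ℤ) * contentSum m =
      ((l.sum : ℤ) - 2) * (numPaths [] l : ℤ) * contentSum l := by
  rw [finsum_mem_covers hl]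
  rcases hn : l.sum with _ | n
  · rw [contentSum_eq_zero_of_sum_le_one hl (by omega)]
    simp
  · have hcomm := succ_smul_pow_apply_eq_of_lie_lie_lie_eq_zero
      (lie_lie_lie_lowering_contentOperator l.length) fun k (hk : n ≤ k) =>
        contentOperator_lowering_pow_partitionAlternant hl le_rfl (by omega)
    rw [lowering_pow_contentOperator_lowering_partitionAlternant hl le_rfl hn, ← hn,
      lowering_pow_sum_contentOperator_partitionAlternant hl le_rfl] at hcomm
    have heval := congrFun hcomm fun i => i.rev
    simp only [Pi.smul_apply, partitionAlternant_nil_apply_rev, smul_eq_mul] at heval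
    refine mul_left_cancel₀ two_ne_zero ?_
    push_cast
    linear_combination heval
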